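/- Let Γ be a connected non-bipartite graph such that the vertex set of every odd cycle of Γ is a dominating set. Then for every t ≥ 1 the module I^{(t)}/I^t has finite length and H^1_m(R/I^t) ≅ H^1_m(R/I^{(t)}). -/

import Mathlib

open MvPolynomial

noncomputable section

/-- The edge ideal of a graph `Γ` on vertex set `σ`, in `k[x_i : i ∈ σ]`. -/
def edgeIdeal (k : Type) [Field k] {σ : Type} (Γ : SimpleGraph σ) :
    Ideal (MvPolynomial σ k) :=
  Ideal.span { m | ∃ i j : σ, Γ.Adj i j ∧ m = X i * X j }

/-- The maximal graded ideal `(x_i : i ∈ σ)` of `k[x_i : i ∈ σ]`. -/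
def maxIdeal (k : Type) [Field k] (σ : Type) : Ideal (MvPolynomial σ k) :=
  Ideal.span (Set.range (X : σ → MvPolynomial σ k))

/-- `depth R/J = 0`, i.e. the maximal graded ideal is an associated prime of `R/J`. -/
def DepthZero (k : Type) [Field k] {σ : Type} (J : Ideal (MvPolynomial σ k)) : Prop :=
  maxIdeal k σ ∈ associatedPrimes (MvPolynomial σ k) (MvPolynomial σ k ⧸ J)

/-- The `i`-th local cohomology of `R/J` with support in the maximal graded ideal. -/
def locCoh (k : Type) [Field k] {σ : Type} (J : Ideal (MvPolynomial σ k)) (i : ℕ) :=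
  (localCohomology (maxIdeal k σ) i).obj (ModuleCat.of _ (MvPolynomial σ k ⧸ J))

/-- `depth R/J`, defined as the least `i` with `H^i_m(R/J) ≠ 0`. -/
def rDepth (k : Type) [Field k] {σ : Type} (J : Ideal (MvPolynomial σ k)) : ℕ :=
  sInf { i | Nontrivial (locCoh k J i) }

/-- A set `U` of vertices is dominating: every vertex outside `U` is adjacent to a
vertex of `U`. -/
def Dominating {σ : Type} (Γ : SimpleGraph σ) (U : Set σ) : Prop :=
  ∀ v ∉ U, ∃ u ∈ U, Γ.Adj u v

/-- The closed neighborhood `N[v]` of a vertex. -/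
def closedNbhd {σ : Type} (Γ : SimpleGraph σ) (v : σ) : Set σ :=
  insert v { u | Γ.Adj v u }

/-- The closed neighborhood `N[C]` of a set of vertices. -/
def closedNbhdSet {σ : Type} (Γ : SimpleGraph σ) (C : Set σ) : Set σ :=
  ⋃ v ∈ C, closedNbhd Γ v

/-- An odd cycle of length `m` (given as an injective map `ZMod m → σ` with consecutive
vertices adjacent) in `Γ`. -/
def IsOddCycle {σ : Type} (Γ : SimpleGraph σ) (m : ℕ) (c : ZMod m → σ) : Prop :=
  Odd m ∧ 3 ≤ m ∧ Function.Injective c ∧ ∀ i, Γ.Adj (c i) (c (i + 1))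

/-- `F` is an independent set of `Γ`. -/
def IsIndep {σ : Type} [Fintype σ] [DecidableEq σ] (Γ : SimpleGraph σ) (F : Finset σ) : Prop :=
  ∀ i ∈ F, ∀ j ∈ F, ¬ Γ.Adj i j

/-- `F` is a maximal independent set of `Γ`. -/
def IsMaxIndep {σ : Type} [Fintype σ] [DecidableEq σ] (Γ : SimpleGraph σ) (F : Finset σ) : Prop :=
  IsIndep Γ F ∧ ∀ G : Finset σ, IsIndep Γ G → F ⊆ G → G = F

/-- The prime ideal `P_F = (x_i : i ∉ F)`. -/
def PF (k : Type) [Field k] {σ : Type} [Fintype σ] [DecidableEq σ] (F : Finset σ) :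
    Ideal (MvPolynomial σ k) :=
  Ideal.span { m | ∃ i ∉ F, m = X i }

/-- The `t`-th symbolic power `I^{(t)} = ⋂_{F maximal independent} P_F^t` of the edge ideal. -/
def symbPow (k : Type) [Field k] {σ : Type} [Fintype σ] [DecidableEq σ]
    (Γ : SimpleGraph σ) (t : ℕ) : Ideal (MvPolynomial σ k) :=
  ⨅ F ∈ { F : Finset σ | IsMaxIndep Γ F }, PF k F ^ t

/-- The monomial `x^a`. -/
def xPow (k : Type) [Field k] {σ : Type} [Fintype σ] (a : σ → ℕ) : MvPolynomial σ k :=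
  ∏ i, X i ^ a i

/-- The localization `R[x_i^{-1} : i ∈ F]`. -/
abbrev locAt (k : Type) [Field k] {σ : Type} (F : Finset σ) :=
  Localization (Submonoid.closure ((fun i => (X i : MvPolynomial σ k)) '' (F : Set σ)))

/-- The degree complex `Δ_a(J) = {F : x^a ∉ J·R[x_i^{-1} : i ∈ F]}` of a monomial ideal `J`. -/
def degComplex (k : Type) [Field k] {σ : Type} [Fintype σ] (J : Ideal (MvPolynomial σ k))
    (a : σ → ℕ) : Set (Finset σ) :=
  { F | algebraMap (MvPolynomial σ k) (locAt k F) (xPow k a) ∉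
      J.map (algebraMap (MvPolynomial σ k) (locAt k F)) }

/-- `F` is a facet (maximal face) of the complex `Δ`. -/
def IsFacet {σ : Type} (Δ : Set (Finset σ)) (F : Finset σ) : Prop :=
  F ∈ Δ ∧ ∀ G ∈ Δ, F ⊆ G → G = F

/-- The complex `Δ` is disconnected: its vertex set splits into two nonempty parts such that
no face meets both. -/
def ComplexDisconnected {σ : Type} (Δ : Set (Finset σ)) : Prop :=
  ∃ A B : Set σ, A.Nonempty ∧ B.Nonempty ∧ Disjoint A B ∧
    (∀ i, {i} ∈ Δ ↔ i ∈ A ∪ B) ∧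
    ∀ F ∈ Δ, ¬ ((∃ i ∈ F, i ∈ A) ∧ (∃ j ∈ F, j ∈ B))

/-- The polynomial ring `R_v = k[x_i : i ≠ v]`. -/
abbrev Rv (k : Type) [Field k] {σ : Type} (v : σ) := MvPolynomial { i : σ // i ≠ v } k

/-- The localization `R[x_v^{-1}]`. -/
abbrev LocAway (k : Type) [Field k] {σ : Type} (v : σ) :=
  Localization.Away (X v : MvPolynomial σ k)

/-- For an ideal `I` of `R`, the ideal `I_v = I·R[x_v^{-1}] ∩ R_v` of `R_v`. -/
def idealV (k : Type) [Field k] {σ : Type} (I : Ideal (MvPolynomial σ k)) (v : σ) :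
    Ideal (Rv k v) :=
  Ideal.comap ((algebraMap (MvPolynomial σ k) (LocAway k v)).comp
      (MvPolynomial.rename (Subtype.val : { i : σ // i ≠ v } → σ)).toRingHom)
    (I.map (algebraMap (MvPolynomial σ k) (LocAway k v)))

/-- The edge ideal of the induced subgraph `Γ_U` in `k[x_i : i ∈ U]`. -/
def edgeIdealOn (k : Type) [Field k] {σ : Type} (Γ : SimpleGraph σ) (U : Set σ) :
    Ideal (MvPolynomial U k) :=
  Ideal.span { m | ∃ i j : U, Γ.Adj (i : σ) (j : σ) ∧ m = X i * X j }

/-- `Γ` has no isolated vertices. -/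
def NoIsolated {σ : Type} (Γ : SimpleGraph σ) : Prop :=
  ∀ v : σ, ∃ u : σ, Γ.Adj v u

/-!
Put `m = maxIdeal k σ`. The crux is that `x_v ^ t • I^{(t)} ⊆ I ^ t` for every vertex `v`; then a
power of `m` kills `I^{(t)}/I^t`, which therefore has finite length.

Since odd cycles dominate, the graph outside the closed neighborhood of `v` is bipartite. Adding `v`
to one of its colour classes gives an independent set `L` such that the vertices outside `L` and not
adjacent to `v` are independent too. For a monomial `x^a ∈ I^{(t)}`, to put `x_v ^ t * x^a` in
`I ^ t` it suffices to pack `t` edges between `L` and its complement with vertex capacities given by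
the exponents. The deficiency version of Hall's theorem provides them: if `v ∉ S ⊆ L`, the
capacity of `v` alone makes up for the deficiency of `S`, and if `v ∈ S`, then `S` and the vertices
outside `L` not adjacent to `S` form an independent set, so the bound comes from `x^a ∈ P_F ^ t` for
a maximal independent set `F` containing it.

For local cohomology, let `φ : Y → Y'` be surjective with `m ^ N` killing `ker φ`. An element of
`Ext¹(R/J, Y)` is a linear map `J → Y` modulo restrictions of maps `R → Y`, and by Artin–Rees a map
`J → Y'` lifts along `φ` after restriction to `m ^ n * J` for large `n`, while a map `J → Y` whose
image in `Y'` extends to `R` itself extends after restriction to `m ^ N * J`. Hence `φ` induces an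
isomorphism on `H¹_m = colim Ext¹(R/m ^ n, -)`.
-/

section HomologyInDegreeOne

open CategoryTheory Limits

variable {D : Type*} [Category* D] [Abelian D]

/-- The map `H₁(K) ⟶ A` induced by a map `K₁ ⟶ A` that vanishes on boundaries. -/
def homologyOneTo (K : ChainComplex D ℕ) {A : D} (a : K.X 1 ⟶ A) (ha : K.d 2 1 ≫ a = 0) :
    K.homology 1 ⟶ A :=
  K.homologyι 1 ≫ K.descOpcycles a 2 (by simp) ha

variable {K K' : ChainComplex D ℕ} {A A' : D} {a : K.X 1 ⟶ A} {a' : K'.X 1 ⟶ A'}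
  {ha : K.d 2 1 ≫ a = 0} {ha' : K'.d 2 1 ≫ a' = 0}

lemma isIso_descOpcycles_of_exact [Epi a] (hexact : (ShortComplex.mk _ _ ha).Exact) :
    IsIso (K.descOpcycles a 2 (by simp) ha) := by
  obtain ⟨s, hs⟩ := CokernelCofork.IsColimit.desc' hexact.gIsCokernel (K.pOpcycles 1)
    (K.d_pOpcycles 2 1)
  replace hs : a ≫ s = K.pOpcycles 1 := hs
  refine ⟨s, ?_, ?_⟩
  · simp [← cancel_epi (K.pOpcycles 1), hs]
  · simp [← cancel_epi a, reassoc_of% hs]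

lemma descOpcycles_comp_eq_fromOpcycles {b : A ⟶ K.X 0} (hab : a ≫ b = K.d 1 0) :
    K.descOpcycles a 2 (by simp) ha ≫ b = K.fromOpcycles 1 0 := by
  simp [← cancel_epi (K.pOpcycles 1), hab]

lemma homologyOneTo_comp {b : A ⟶ K.X 0} (hab : a ≫ b = K.d 1 0) :
    homologyOneTo K a ha ≫ b = 0 := by
  simp [homologyOneTo, descOpcycles_comp_eq_fromOpcycles hab]

lemma mono_homologyOneTo [Epi a] (hexact : (ShortComplex.mk _ _ ha).Exact) :
    Mono (homologyOneTo K a ha) := by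
  have := isIso_descOpcycles_of_exact hexact
  exact mono_comp _ _

lemma exact_homologyOneTo [Epi a] {b : A ⟶ K.X 0} (hab : a ≫ b = K.d 1 0)
    (hexact : (ShortComplex.mk _ _ ha).Exact) :
    (ShortComplex.mk _ _ (homologyOneTo_comp (ha := ha) hab)).Exact := by
  have := isIso_descOpcycles_of_exact hexact
  let φ : ShortComplex.mk _ _ (K.homologyι_comp_fromOpcycles 1 0) ⟶
      ShortComplex.mk _ _ (homologyOneTo_comp (ha := ha) hab) :=
    { τ₁ := 𝟙 _
      τ₂ := K.descOpcycles a 2 (by simp) ha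
      τ₃ := 𝟙 _
      comm₁₂ := by simp [homologyOneTo]
      comm₂₃ := by simp [descOpcycles_comp_eq_fromOpcycles hab] }
  exact (ShortComplex.exact_iff_of_epi_of_isIso_of_mono φ).1
    (ShortComplex.exact_of_f_is_kernel _ (K.homologyIsKernel 1 0 (by simp)))

lemma homologyOneTo_naturality (f : K ⟶ K') (α : A ⟶ A') (h : f.f 1 ≫ a' = a ≫ α) :
    HomologicalComplex.homologyMap f 1 ≫ homologyOneTo K' a' ha' = homologyOneTo K a ha ≫ α := by
  have hdesc : HomologicalComplex.opcyclesMap f 1 ≫ K'.descOpcycles a' 2 (by simp) ha' =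
      K.descOpcycles a 2 (by simp) ha ≫ α := by
    simp [← cancel_epi (K.pOpcycles 1), h]
  simp [homologyOneTo, hdesc]

end HomologyInDegreeOne

section MapHomologyInDegreeOne

open CategoryTheory Limits

variable {C D : Type*} [Category* C] [Abelian C] [Category* D] [Abelian D]
  (F : C ⥤ D) [F.Additive] {G : C ⥤ D} [G.Additive]
  {P P' : ChainComplex C ℕ} {A A' : C} {a : P.X 1 ⟶ A} {a' : P'.X 1 ⟶ A'} {b : A ⟶ P.X 0}

lemma map_d_comp_map_eq_zero (ha : P.d 2 1 ≫ a = 0) :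
    ((F.mapHomologicalComplex _).obj P).d 2 1 ≫ F.map a = 0 :=
  (F.map_comp _ _).symm.trans ((congrArg F.map ha).trans (F.map_zero _ _))

/-- The map `H₁(F P) ⟶ F A` induced by a map `P₁ ⟶ A` that vanishes on boundaries. -/
def mapHomologyOneTo (ha : P.d 2 1 ≫ a = 0) :
    (HomologicalComplex.homologyFunctor D _ 1).obj ((F.mapHomologicalComplex _).obj P) ⟶ F.obj A :=
  homologyOneTo ((F.mapHomologicalComplex _).obj P) (F.map a) (map_d_comp_map_eq_zero F ha)

lemma mapHomologyOneTo_comp (ha : P.d 2 1 ≫ a = 0) (hab : a ≫ b = P.d 1 0) :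
    mapHomologyOneTo F ha ≫ F.map b = 0 :=
  homologyOneTo_comp (K := (F.mapHomologicalComplex _).obj P)
    ((F.map_comp a b).symm.trans (congrArg F.map hab))

lemma mapHomologyOneTo_naturality (ha : P.d 2 1 ≫ a = 0) (ha' : P'.d 2 1 ≫ a' = 0) (f : P ⟶ P')
    (α : A ⟶ A') (h : f.f 1 ≫ a' = a ≫ α) :
    (HomologicalComplex.homologyFunctor D _ 1).map ((F.mapHomologicalComplex _).map f) ≫
      mapHomologyOneTo F ha' = mapHomologyOneTo F ha ≫ F.map α :=
  homologyOneTo_naturality ((F.mapHomologicalComplex _).map f) (F.map α)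
    ((F.map_comp _ _).symm.trans ((congrArg F.map h).trans (F.map_comp _ _)))

variable {F} in
lemma mapHomologyOneTo_app (ha : P.d 2 1 ≫ a = 0) (τ : F ⟶ G) :
    (HomologicalComplex.homologyFunctor D _ 1).map ((NatTrans.mapHomologicalComplex τ _).app P) ≫
      mapHomologyOneTo G ha = mapHomologyOneTo F ha ≫ τ.app A :=
  homologyOneTo_naturality ((NatTrans.mapHomologicalComplex τ _).app P) (τ.app A)
    (τ.naturality a).symm

variable [PreservesFiniteColimits F] [Epi a] {ha : P.d 2 1 ≫ a = 0}

lemma exact_map_of_exact (hexact : (ShortComplex.mk _ _ ha).Exact) :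
    (ShortComplex.mk _ _ (map_d_comp_map_eq_zero F ha)).Exact :=
  hexact.map_of_epi_of_preservesCokernel F ‹Epi a› inferInstance

lemma mono_mapHomologyOneTo (hexact : (ShortComplex.mk _ _ ha).Exact) :
    Mono (mapHomologyOneTo F ha) :=
  have : Epi (X := ((F.mapHomologicalComplex _).obj P).X 1) (F.map a) :=
    inferInstanceAs (Epi (F.map a))
  mono_homologyOneTo (exact_map_of_exact F hexact)

lemma exact_mapHomologyOneTo (hab : a ≫ b = P.d 1 0) (hexact : (ShortComplex.mk _ _ ha).Exact) :
    (ShortComplex.mk _ _ (mapHomologyOneTo_comp F ha hab)).Exact :=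
  have : Epi (X := ((F.mapHomologicalComplex _).obj P).X 1) (F.map a) :=
    inferInstanceAs (Epi (F.map a))
  exact_homologyOneTo (K := (F.mapHomologicalComplex _).obj P)
    ((F.map_comp a b).symm.trans (congrArg F.map hab)) (exact_map_of_exact F hexact)

end MapHomologyInDegreeOne

section SplicedResolution

open CategoryTheory Limits

variable {C : Type*} [Category* C] [Abelian C]

/-- The augmentation `Q₀ ⟶ Z` of a projective resolution of `Z`, with target `Z` itself instead of
the degree-zero term of the complex concentrated in degree zero. -/
def augmentation {Z : C} (Q : ProjectiveResolution Z) : Q.complex.X 0 ⟶ Z := Q.π.f 0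

instance epi_augmentation {Z : C} (Q : ProjectiveResolution Z) : Epi (augmentation Q) :=
  inferInstanceAs (Epi (Q.π.f 0))

lemma d_comp_augmentation {Z : C} (Q : ProjectiveResolution Z) :
    Q.complex.d 1 0 ≫ augmentation Q = 0 :=
  Q.complex_d_comp_π_f_zero

lemma exact_augmentation {Z : C} (Q : ProjectiveResolution Z) :
    (ShortComplex.mk _ _ (d_comp_augmentation Q)).Exact :=
  Q.exact₀

lemma lift_comp_augmentation {Z Z' : C} (f : Z ⟶ Z') (Q : ProjectiveResolution Z)
    (Q' : ProjectiveResolution Z') :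
    (ProjectiveResolution.lift f Q Q').f 0 ≫ augmentation Q' = augmentation Q ≫ f :=
  ProjectiveResolution.lift_commutes_zero f Q Q'

variable {S S' : ShortComplex C} (Q : ProjectiveResolution S.X₁) (Q' : ProjectiveResolution S'.X₁)

/-- The complex `⋯ ⟶ Q₁ ⟶ Q₀ ⟶ S.X₂` obtained by splicing a resolution `Q` of `S.X₁` with `S.f`. -/
abbrev splicedComplex : ChainComplex C ℕ :=
  Q.complex.augment (augmentation Q ≫ S.f)
    (by rw [← Category.assoc, d_comp_augmentation, zero_comp])

lemma augmentation_comp_f_comp_g : (augmentation Q ≫ S.f) ≫ S.g = 0 := by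
  rw [Category.assoc, S.zero, comp_zero]

lemma exact_augmentation_comp_f (hS : S.Exact) :
    (ShortComplex.mk _ _ (augmentation_comp_f_comp_g Q)).Exact := by
  let φ : ShortComplex.mk _ _ (augmentation_comp_f_comp_g Q) ⟶ S :=
    { τ₁ := augmentation Q, τ₂ := 𝟙 _, τ₃ := 𝟙 _ }
  have : Epi φ.τ₁ := epi_augmentation Q
  exact (ShortComplex.exact_iff_of_epi_of_isIso_of_mono φ).2 hS

lemma splicedComplex_exactAt_succ [Mono S.f] (n : ℕ) : (splicedComplex Q).ExactAt (n + 1) := by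
  rw [HomologicalComplex.exactAt_iff' _ (n + 2) (n + 1) n (by simp) (by simp)]
  cases n with
  | zero =>
    let φ : ShortComplex.mk _ _ (d_comp_augmentation Q) ⟶ (splicedComplex Q).sc' 2 1 0 :=
      { τ₁ := 𝟙 (Q.complex.X 1)
        τ₂ := 𝟙 (Q.complex.X 0)
        τ₃ := S.f
        comm₁₂ := (Category.id_comp _).trans (Category.comp_id _).symm
        comm₂₃ := Category.id_comp _ }
    have : Epi φ.τ₁ := inferInstanceAs (Epi (𝟙 _))
    have : IsIso φ.τ₂ := inferInstanceAs (IsIso (𝟙 _))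
    have : Mono φ.τ₃ := ‹Mono S.f›
    exact (ShortComplex.exact_iff_of_epi_of_isIso_of_mono φ).1 (exact_augmentation Q)
  | succ n => exact Q.exact_succ n

variable (hS : S.ShortExact) (hS' : S'.ShortExact) [Projective S.X₂] [Projective S'.X₂]

/-- The projective resolution of `S.X₃` obtained by splicing a projective resolution of `S.X₁` with
a short exact sequence `S` whose middle term is projective. -/
def splicedResolution : ProjectiveResolution S.X₃ where
  complex := splicedComplex Q
  projective n := by
    cases n with
    | zero => exact ‹Projective S.X₂›
    | succ n => exact Q.projective n
  π := (ChainComplex.toSingle₀Equiv _ _).symm ⟨S.g, augmentation_comp_f_comp_g Q⟩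
  quasiIso := ⟨fun n => by
    have := hS.mono_f
    cases n with
    | zero =>
      rw [ChainComplex.quasiIsoAt₀_iff, ShortComplex.quasiIso_iff_of_zeros' _ rfl rfl rfl]
      refine (ShortComplex.exact_and_epi_g_iff_of_iso ?_).2
        ⟨exact_augmentation_comp_f Q hS.exact, hS.epi_g⟩
      exact ShortComplex.isoMk (Iso.refl _) (Iso.refl _) (Iso.refl _)
        ((Category.id_comp _).trans (Category.comp_id _).symm)
        ((Category.id_comp _).trans
          ((ChainComplex.toSingle₀Equiv_symm_apply_f_zero (C := splicedComplex Q) S.g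
            (augmentation_comp_f_comp_g Q)).symm.trans (Category.comp_id _).symm))
    | succ n =>
      rw [quasiIsoAt_iff_exactAt']
      · exact splicedComplex_exactAt_succ Q n
      · exact ChainComplex.exactAt_succ_single_obj _ _⟩

lemma augmentation_splicedResolution : augmentation (splicedResolution Q hS) = S.g :=
  ChainComplex.toSingle₀Equiv_symm_apply_f_zero _ _

/-- The epimorphism from the degree-one term of the spliced resolution onto the syzygy `S.X₁`. -/
def syzygyCover : (splicedResolution Q hS).complex.X 1 ⟶ S.X₁ := augmentation Q

/-- The inclusion of the syzygy `S.X₁` into the degree-zero term of the spliced resolution. -/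
def syzygyInclusion : S.X₁ ⟶ (splicedResolution Q hS).complex.X 0 := S.f

instance epi_syzygyCover : Epi (syzygyCover Q hS) := epi_augmentation Q

lemma d_comp_syzygyCover : (splicedResolution Q hS).complex.d 2 1 ≫ syzygyCover Q hS = 0 :=
  d_comp_augmentation Q

lemma exact_syzygyCover : (ShortComplex.mk _ _ (d_comp_syzygyCover Q hS)).Exact :=
  exact_augmentation Q

lemma syzygyCover_comp_syzygyInclusion :
    syzygyCover Q hS ≫ syzygyInclusion Q hS = (splicedResolution Q hS).complex.d 1 0 :=
  rfl

/-- The map of spliced resolutions induced by a map of short exact sequences. -/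
def splicedMap (φ : S ⟶ S') :
    (splicedResolution Q hS).complex ⟶ (splicedResolution Q' hS').complex where
  f
    | 0 => φ.τ₂
    | n + 1 => (ProjectiveResolution.lift φ.τ₁ Q Q').f n
  comm' := by
    rintro _ (_ | j) rfl
    · change (ProjectiveResolution.lift φ.τ₁ Q Q').f 0 ≫ augmentation Q' ≫ S'.f =
        (augmentation Q ≫ S.f) ≫ φ.τ₂
      rw [← Category.assoc, lift_comp_augmentation, Category.assoc, Category.assoc, φ.comm₁₂]
    · exact (ProjectiveResolution.lift φ.τ₁ Q Q').comm _ _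

lemma splicedMap_comp_syzygyCover (φ : S ⟶ S') :
    (splicedMap Q Q' hS hS' φ).f 1 ≫ syzygyCover Q' hS' = syzygyCover Q hS ≫ φ.τ₁ :=
  lift_comp_augmentation φ.τ₁ Q Q'

lemma splicedMap_comp_augmentation (φ : S ⟶ S') :
    (splicedMap Q Q' hS hS' φ).f 0 ≫ augmentation (splicedResolution Q' hS') =
      augmentation (splicedResolution Q hS) ≫ φ.τ₃ := by
  rw [augmentation_splicedResolution, augmentation_splicedResolution]
  exact φ.comm₂₃

end SplicedResolution

section LeftDerivedOne

open CategoryTheory Limits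

variable {C D : Type*} [Category* C] [Abelian C] [HasProjectiveResolutions C]
  [Category* D] [Abelian D] (F : C ⥤ D) [F.Additive] {G : C ⥤ D} [G.Additive]
  {S S' : ShortComplex C} (Q : ProjectiveResolution S.X₁) (Q' : ProjectiveResolution S'.X₁)
  (hS : S.ShortExact) (hS' : S'.ShortExact) [Projective S.X₂] [Projective S'.X₂]

/-- The connecting map `L₁F(S.X₃) ⟶ F(S.X₁)` of a short exact sequence with projective middle term,
computed on a spliced resolution. -/
def leftDerivedOneTo : (F.leftDerived 1).obj S.X₃ ⟶ F.obj S.X₁ :=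
  ((splicedResolution Q hS).isoLeftDerivedObj F 1).hom ≫
    mapHomologyOneTo F (d_comp_syzygyCover Q hS)

lemma leftDerivedOneTo_comp :
    leftDerivedOneTo F Q hS ≫ F.map (syzygyInclusion Q hS) = 0 := by
  rw [leftDerivedOneTo, Category.assoc,
    mapHomologyOneTo_comp F _ (syzygyCover_comp_syzygyInclusion Q hS), comp_zero]

lemma leftDerived_map_comp_leftDerivedOneTo (φ : S ⟶ S') :
    (F.leftDerived 1).map φ.τ₃ ≫ leftDerivedOneTo F Q' hS' =
      leftDerivedOneTo F Q hS ≫ F.map φ.τ₁ := by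
  have hiso := ProjectiveResolution.isoLeftDerivedObj_hom_naturality φ.τ₃
    (splicedResolution Q hS) (splicedResolution Q' hS') (splicedMap Q Q' hS hS' φ)
    (splicedMap_comp_augmentation Q Q' hS hS' φ) F 1
  rw [leftDerivedOneTo, reassoc_of% hiso, mapHomologyOneTo_naturality F (d_comp_syzygyCover Q hS)
    _ _ φ.τ₁ (splicedMap_comp_syzygyCover Q Q' hS hS' φ), leftDerivedOneTo, Category.assoc]

variable {F} in
lemma leftDerived_app_comp_leftDerivedOneTo (τ : F ⟶ G) :
    (NatTrans.leftDerived τ 1).app S.X₃ ≫ leftDerivedOneTo G Q hS =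
      leftDerivedOneTo F Q hS ≫ τ.app S.X₁ := by
  rw [ProjectiveResolution.leftDerived_app_eq τ (splicedResolution Q hS)]
  simp only [leftDerivedOneTo, Category.assoc, Iso.inv_hom_id_assoc, mapHomologyOneTo_app]

variable [PreservesFiniteColimits F]

lemma mono_leftDerivedOneTo : Mono (leftDerivedOneTo F Q hS) :=
  have := mono_mapHomologyOneTo F (exact_syzygyCover Q hS)
  mono_comp _ _

lemma exact_leftDerivedOneTo : (ShortComplex.mk _ _ (leftDerivedOneTo_comp F Q hS)).Exact := by
  let φ : ShortComplex.mk _ _ (leftDerivedOneTo_comp F Q hS) ⟶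
      ShortComplex.mk _ _ (mapHomologyOneTo_comp F (d_comp_syzygyCover Q hS)
        (syzygyCover_comp_syzygyInclusion Q hS)) :=
    { τ₁ := ((splicedResolution Q hS).isoLeftDerivedObj F 1).hom
      τ₂ := 𝟙 _
      τ₃ := 𝟙 _
      comm₁₂ := by simp only [leftDerivedOneTo, Category.comp_id] }
  exact (ShortComplex.exact_iff_of_epi_of_isIso_of_mono φ).2
    (exact_mapHomologyOneTo F (syzygyCover_comp_syzygyInclusion Q hS) (exact_syzygyCover Q hS))

end LeftDerivedOne

section ExtOne

open CategoryTheory Limits Opposite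

variable {R : Type*} [Ring R] {C : Type*} [Category* C] [Abelian C] [Linear R C]

instance preservesLimits_linearYoneda_obj (Y : C) :
    PreservesLimits ((linearYoneda R C).obj Y) :=
  have : PreservesLimits ((linearYoneda R C).obj Y ⋙ forget _) :=
    inferInstanceAs (PreservesLimits (yoneda.obj Y))
  preservesLimits_of_reflects_of_preserves _ (forget _)

variable [EnoughProjectives C] {S S' : ShortComplex C} (hS : S.ShortExact) (hS' : S'.ShortExact)
  [Projective S.X₂] [Projective S'.X₂] {Y Y' : C}

/-- The connecting map `Hom(S.X₁, Y) → Ext¹(S.X₃, Y)` of a short exact sequence with projective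
middle term. -/
def extOneConnecting (Y : C) (f : S.X₁ ⟶ Y) : ((Ext R C 1).obj (op S.X₃)).obj Y :=
  (leftDerivedOneTo ((linearYoneda R C).obj Y).rightOp (projectiveResolution S.X₁) hS).unop.hom f

lemma extOneConnecting_surjective : Function.Surjective (extOneConnecting (R := R) hS Y) := by
  have : PreservesFiniteColimits ((linearYoneda R C).obj Y).rightOp :=
    preservesFiniteColimits_rightOp _
  have := mono_leftDerivedOneTo ((linearYoneda R C).obj Y).rightOp (projectiveResolution S.X₁) hS
  exact (ModuleCat.epi_iff_surjective _).1 (unop_epi_of_mono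
    (leftDerivedOneTo ((linearYoneda R C).obj Y).rightOp (projectiveResolution S.X₁) hS))

lemma extOneConnecting_eq_zero_iff (f : S.X₁ ⟶ Y) :
    extOneConnecting (R := R) hS Y f = 0 ↔ ∃ g : S.X₂ ⟶ Y, S.f ≫ g = f := by
  have : PreservesFiniteColimits ((linearYoneda R C).obj Y).rightOp :=
    preservesFiniteColimits_rightOp _
  have hexact := (exact_leftDerivedOneTo ((linearYoneda R C).obj Y).rightOp
    (projectiveResolution S.X₁) hS).unop
  exact (ShortComplex.ShortExact.moduleCat_exact_iff_function_exact _).1 hexact f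

lemma ext_map_extOneConnecting (φ : Y ⟶ Y') (f : S.X₁ ⟶ Y) :
    ((Ext R C 1).obj (op S.X₃)).map φ (extOneConnecting hS Y f) =
      extOneConnecting hS Y' (f ≫ φ) :=
  congrArg (fun m => m.unop.hom f) (leftDerived_app_comp_leftDerivedOneTo
    (projectiveResolution S.X₁) hS (NatTrans.rightOp ((linearYoneda R C).map φ)))

lemma ext_map_app_extOneConnecting (φ : S ⟶ S') (f : S'.X₁ ⟶ Y) :
    ((Ext R C 1).map φ.τ₃.op).app Y (extOneConnecting hS' Y f) =
      extOneConnecting hS Y (φ.τ₁ ≫ f) :=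
  congrArg (fun m => m.unop.hom f) (leftDerived_map_comp_leftDerivedOneTo
    ((linearYoneda R C).obj Y).rightOp (projectiveResolution S.X₁) (projectiveResolution S'.X₁)
    hS hS' φ)

end ExtOne

section KernelTorsion

variable {R M P Q : Type*} [CommRing R] [AddCommGroup M] [Module R M]
  [AddCommGroup P] [Module R P] [AddCommGroup Q] [Module R Q]

lemma exists_comp_eq_of_ker_le_ker {p : M →ₗ[R] P} (hp : Function.Surjective p) {g : M →ₗ[R] Q}
    (hg : LinearMap.ker p ≤ LinearMap.ker g) : ∃ h : P →ₗ[R] Q, h ∘ₗ p = g :=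
  ⟨(LinearMap.ker p).liftQ g hg ∘ₗ (p.quotKerEquivOfSurjective hp).symm, LinearMap.ext fun x => by
    simp [LinearMap.quotKerEquivOfSurjective_symm_apply]⟩

lemma eq_smul_of_mem_ideal_mul {I J : Ideal R} {φ : P →ₗ[R] Q}
    (hker : I ≤ (LinearMap.ker φ).annihilator) {f : J →ₗ[R] P} {y : P}
    (hfy : ∀ j : J, φ (f j) = (j : R) • φ y) (x : J) (hx : (x : R) ∈ I * J) :
    f x = (x : R) • y := by
  let g : J →ₗ[R] P := f - LinearMap.toSpanSingleton R P y ∘ₗ J.subtype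
  have range_le_ker (j : J) : g j ∈ LinearMap.ker φ := by simp [g, hfy]
  have smul_top_le_ker : I • (⊤ : Submodule R J) ≤ LinearMap.ker g :=
    Submodule.smul_le.2 fun a ha j _ => by
      rw [LinearMap.mem_ker, map_smul]
      exact Submodule.mem_annihilator.1 (hker ha) _ (range_le_ker j)
  exact sub_eq_zero.1 (smul_top_le_ker ((Submodule.mem_smul_top_iff I J x).2 hx))

lemma exists_pow_smul_top_inf_le_ker [IsNoetherianRing R] [Module.Finite R M] {I : Ideal R}
    {K : Submodule R P} {m : ℕ} (hK : I ^ m ≤ K.annihilator) {N : Submodule R M} {g : M →ₗ[R] P}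
    (hN : N ≤ K.comap g) : ∃ n, I ^ n • ⊤ ⊓ N ≤ LinearMap.ker g := by
  obtain ⟨c, hc⟩ := Ideal.exists_pow_inf_eq_pow_smul I N
  refine ⟨c + m, ?_⟩
  rw [hc _ (Nat.le_add_right c m), Nat.add_sub_cancel_left, Submodule.smul_le]
  intro s hs x hx
  rw [LinearMap.mem_ker, map_smul]
  exact Submodule.mem_annihilator.1 (hK hs) _ (hN hx.2)

lemma exists_lift_pow_smul [IsNoetherianRing R] {I : Ideal R} {φ : P →ₗ[R] Q}
    (hφ : Function.Surjective φ) {m : ℕ} (hker : I ^ m ≤ (LinearMap.ker φ).annihilator)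
    (N : Submodule R M) [Module.Finite R N] (f : N →ₗ[R] Q) :
    ∃ (n : ℕ) (g : ↥(I ^ n • N) →ₗ[R] P),
      φ ∘ₗ g = f ∘ₗ Submodule.inclusion Submodule.smul_le_right := by
  obtain ⟨r, p, hp⟩ := Module.Finite.exists_fin' R N
  obtain ⟨l, hl⟩ := Module.projective_lifting_property φ (f ∘ₗ p) hφ
  have ker_p_le : LinearMap.ker p ≤ (LinearMap.ker φ).comap l := fun x hx => by
    have hlx : φ (l x) = f (p x) := DFunLike.congr_fun hl x
    rw [Submodule.mem_comap, LinearMap.mem_ker, hlx, LinearMap.mem_ker.1 hx, map_zero]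
  obtain ⟨n, hn⟩ := exists_pow_smul_top_inf_le_ker hker ker_p_le
  -- The lift `l` need not descend to `N`, but by Artin–Rees its restriction to `A` does.
  let A : Submodule R (Fin r → R) := I ^ n • ⊤
  obtain ⟨h, hh⟩ := exists_comp_eq_of_ker_le_ker (g := l ∘ₗ A.subtype)
    (p.submoduleMap_surjective A) fun a ha => hn ⟨a.2, congrArg Subtype.val ha⟩
  have map_A : A.map p = I ^ n • ⊤ := by
    rw [Submodule.map_smul'', Submodule.map_top, LinearMap.range_eq_top.2 hp]
  let toMap : ↥(I ^ n • N) →ₗ[R] A.map p :=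
    (Submodule.inclusion Submodule.smul_le_right).codRestrict _ fun x => by
      rw [map_A]
      exact (Submodule.mem_smul_top_iff _ _ _).2 x.2
  refine ⟨n, h ∘ₗ toMap, LinearMap.ext fun x => ?_⟩
  obtain ⟨a, ha⟩ := p.submoduleMap_surjective A (toMap x)
  have hla : φ (l a) = f (p a) := DFunLike.congr_fun hl (a : Fin r → R)
  have hha : h (p.submoduleMap A a) = l a := DFunLike.congr_fun hh a
  have hpa : p a = Submodule.inclusion Submodule.smul_le_right x := congrArg Subtype.val ha
  rw [LinearMap.comp_apply, LinearMap.comp_apply, LinearMap.comp_apply, ← ha, hha, hla, hpa]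

end KernelTorsion

section ExtOneOfHom

open CategoryTheory Limits Opposite

universe u

variable {R : Type u} [CommRing R]

/-- The sequence `0 → J → R → R ⧸ J → 0`. -/
def idealSequence (J : Ideal R) : ShortComplex (ModuleCat.{u} R) :=
  ModuleCat.shortComplexOfCompEqZero J.subtype J.mkQ
    (LinearMap.exact_subtype_mkQ J).linearMap_comp_eq_zero

lemma idealSequence_shortExact (J : Ideal R) : (idealSequence J).ShortExact :=
  ModuleCat.shortComplex_shortExact _ (LinearMap.exact_subtype_mkQ J) J.injective_subtype
    J.mkQ_surjective

instance projective_idealSequence_X₂ (J : Ideal R) : Projective (idealSequence J).X₂ :=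
  inferInstanceAs (Projective (ModuleCat.of R R))

/-- The transition map `R ⧸ J' → R ⧸ J` for `J' ≤ J`, in the form used by `localCohomology`. -/
abbrev quotientMapOfLE {J' J : Ideal R} (h : J' ≤ J) :
    ModuleCat.of R (R ⧸ J') ⟶ ModuleCat.of R (R ⧸ J) :=
  ModuleCat.ofHom (Submodule.mapQ J' J LinearMap.id h)

/-- The morphism from `0 → J' → R → R ⧸ J' → 0` to `0 → J → R → R ⧸ J → 0` for `J' ≤ J`. -/
def idealSequenceMap {J' J : Ideal R} (h : J' ≤ J) : idealSequence J' ⟶ idealSequence J where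
  τ₁ := ModuleCat.ofHom (Submodule.inclusion h)
  τ₂ := 𝟙 _
  τ₃ := quotientMapOfLE h
  comm₁₂ := rfl
  comm₂₃ := rfl

/-- The functor `Ext¹(R ⧸ J, -)`. -/
abbrev extOneQuotient (J : Ideal R) : ModuleCat.{u} R ⥤ ModuleCat.{u} R :=
  (Ext R (ModuleCat.{u} R) 1).obj (op (ModuleCat.of R (R ⧸ J)))

/-- The transition map `Ext¹(R ⧸ J, -) ⟶ Ext¹(R ⧸ J', -)` for `J' ≤ J`. -/
abbrev extOneTransition {J' J : Ideal R} (h : J' ≤ J) : extOneQuotient J ⟶ extOneQuotient J' :=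
  (Ext R (ModuleCat.{u} R) 1).map (quotientMapOfLE h).op

variable {Y Y' : ModuleCat.{u} R}

/-- The class in `Ext¹(R ⧸ J, Y)` of a linear map `J → Y`. -/
def extOneOfHom (J : Ideal R) (f : J →ₗ[R] Y) : (extOneQuotient J).obj Y :=
  extOneConnecting (idealSequence_shortExact J) Y (ModuleCat.ofHom f)

lemma extOneOfHom_surjective (J : Ideal R) :
    Function.Surjective (extOneOfHom (Y := Y) J) := fun x =>
  let ⟨f, hf⟩ := extOneConnecting_surjective (idealSequence_shortExact J) x
  ⟨f.hom, hf⟩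

lemma extOneOfHom_eq_zero_iff {J : Ideal R} (f : J →ₗ[R] Y) :
    extOneOfHom J f = 0 ↔ ∃ y : Y, ∀ j : J, f j = (j : R) • y := by
  refine (extOneConnecting_eq_zero_iff (idealSequence_shortExact J) (ModuleCat.ofHom f)).trans
    ⟨fun ⟨g, hg⟩ => ⟨g.hom (1 : R), fun j => ?_⟩, fun ⟨y, hy⟩ =>
      ⟨ModuleCat.ofHom (LinearMap.toSpanSingleton R Y y),
        ModuleCat.hom_ext (LinearMap.ext fun j => (hy j).symm)⟩⟩
  let g' : R →ₗ[R] Y := g.hom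
  calc f j = g' j := (congrArg (fun m => m.hom j) hg).symm
    _ = (j : R) • g' 1 := by rw [← map_smul, smul_eq_mul, mul_one]

lemma ext_map_extOneOfHom {J : Ideal R} (φ : Y ⟶ Y') (f : J →ₗ[R] Y) :
    (extOneQuotient J).map φ (extOneOfHom J f) = extOneOfHom J (φ.hom ∘ₗ f) :=
  ext_map_extOneConnecting (idealSequence_shortExact J) φ (ModuleCat.ofHom f)

lemma ext_map_app_extOneOfHom {J' J : Ideal R} (h : J' ≤ J) (f : J →ₗ[R] Y) :
    (extOneTransition h).app Y (extOneOfHom J f) =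
      extOneOfHom J' (f ∘ₗ Submodule.inclusion h) :=
  ext_map_app_extOneConnecting (idealSequence_shortExact J') (idealSequence_shortExact J)
    (idealSequenceMap h) (ModuleCat.ofHom f)

lemma ext_map_app_eq_zero_of_ext_map_eq_zero {φ : Y ⟶ Y'} (hφ : Function.Surjective φ.hom)
    {I J J' : Ideal R} (hker : I ≤ (LinearMap.ker φ.hom).annihilator) (hJ' : J' ≤ I * J)
    {x : (extOneQuotient J).obj Y} (hx : (extOneQuotient J).map φ x = 0) :
    (extOneTransition (hJ'.trans Ideal.mul_le_right)).app Y x = 0 := by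
  obtain ⟨f, rfl⟩ := extOneOfHom_surjective J x
  rw [ext_map_extOneOfHom, extOneOfHom_eq_zero_iff] at hx
  obtain ⟨y', hy'⟩ := hx
  obtain ⟨y, rfl⟩ := hφ y'
  rw [ext_map_app_extOneOfHom, extOneOfHom_eq_zero_iff]
  exact ⟨y, fun j => eq_smul_of_mem_ideal_mul hker hy' _ (hJ' j.2)⟩

lemma exists_ext_map_eq_ext_map_app [IsNoetherianRing R] {φ : Y ⟶ Y'}
    (hφ : Function.Surjective φ.hom) {I : Ideal R} {m : ℕ}
    (hker : I ^ m ≤ (LinearMap.ker φ.hom).annihilator) {J : Ideal R}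
    (x : (extOneQuotient J).obj Y') :
    ∃ n, ∀ (J' : Ideal R) (hJ' : J' ≤ I ^ n * J), ∃ w,
      (extOneQuotient J').map φ w =
        (extOneTransition (hJ'.trans Ideal.mul_le_right)).app Y' x := by
  obtain ⟨f, rfl⟩ := extOneOfHom_surjective J x
  obtain ⟨n, g, hg⟩ := exists_lift_pow_smul hφ hker J f
  refine ⟨n, fun J' hJ' => ⟨extOneOfHom J' (g ∘ₗ Submodule.inclusion hJ'), ?_⟩⟩
  rw [ext_map_extOneOfHom, ext_map_app_extOneOfHom, ← LinearMap.comp_assoc, hg]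
  rfl

end ExtOneOfHom

section LocalCohomology

open CategoryTheory Limits Opposite

universe u

variable {R : Type u} [CommRing R]

section FilteredColimit

variable {K : Type*} [Category* K]
  [PreservesColimitsOfShape K (forget (ModuleCat.{u} R))]
  {D : K ⥤ ModuleCat.{u} R ⥤ ModuleCat.{u} R} {c : Cocone D} {Y Y' : ModuleCat.{u} R} {φ : Y ⟶ Y'}

lemma injective_map_of_isColimit [IsFiltered K] (hc : IsColimit c)
    (h : ∀ (k : K) (x : (D.obj k).obj Y), (D.obj k).map φ x = 0 →
      ∃ (k' : K) (i : k ⟶ k'), (D.map i).app Y x = 0) :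
    Function.Injective (c.pt.map φ) := by
  rw [injective_iff_map_eq_zero]
  intro a ha
  obtain ⟨k, x, rfl⟩ := Concrete.isColimit_exists_rep _
    (isColimitOfPreserves ((evaluation _ _).obj Y) hc) a
  have map_x_eq_zero : (c.ι.app k).app Y' ((D.obj k).map φ x) = (c.ι.app k).app Y' 0 := by
    rw [map_zero]
    exact (NatTrans.naturality_apply (c.ι.app k) φ x).trans ha
  obtain ⟨k', i, j, hij⟩ := Concrete.isColimit_exists_of_rep_eq _
    (isColimitOfPreserves ((evaluation _ _).obj Y') hc) _ _ map_x_eq_zero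
  obtain ⟨k'', i', hi'⟩ := h k' ((D.map i).app Y x) <|
    (NatTrans.naturality_apply (D.map i) φ x).symm.trans (hij.trans (map_zero _))
  have hw : c.ι.app k = D.map i ≫ D.map i' ≫ c.ι.app k'' := by rw [c.w, c.w]
  calc (c.ι.app k).app Y x = (c.ι.app k'').app Y ((D.map i').app Y ((D.map i).app Y x)) := by
        rw [hw]
        rfl
    _ = 0 := by rw [hi', map_zero]

lemma surjective_map_of_isColimit (hc : IsColimit c)
    (h : ∀ (k : K) (x : (D.obj k).obj Y'), ∃ (k' : K) (i : k ⟶ k') (w : (D.obj k').obj Y),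
      (D.obj k').map φ w = (D.map i).app Y' x) :
    Function.Surjective (c.pt.map φ) := by
  intro a
  obtain ⟨k, x, rfl⟩ := Concrete.isColimit_exists_rep _
    (isColimitOfPreserves ((evaluation _ _).obj Y') hc) a
  obtain ⟨k', i, w, hw⟩ := h k x
  refine ⟨(c.ι.app k').app Y w, ?_⟩
  calc c.pt.map φ ((c.ι.app k').app Y w) = (c.ι.app k').app Y' ((D.map i).app Y' x) := by
        rw [← hw]
        exact (NatTrans.naturality_apply (c.ι.app k') φ w).symm
    _ = (c.ι.app k).app Y' x := by
        rw [← c.w i]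
        rfl

end FilteredColimit

theorem isIso_localCohomology_one_map [IsNoetherianRing R] {I : Ideal R} {Y Y' : ModuleCat.{u} R}
    {φ : Y ⟶ Y'} (hφ : Function.Surjective φ.hom) {m : ℕ}
    (hker : I ^ m ≤ (LinearMap.ker φ.hom).annihilator) :
    IsIso ((localCohomology I 1).map φ) := by
  have : PreservesFilteredColimitsOfSize.{0, 0} (forget (ModuleCat.{u} R)) :=
    preservesFilteredColimitsOfSize_shrink _
  refine (ConcreteCategory.isIso_iff_bijective _).2
    ⟨injective_map_of_isColimit (colimit.isColimit (localCohomology.diagram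
      (localCohomology.idealPowersDiagram I) 1)) fun k x hx => ?_,
    surjective_map_of_isColimit (colimit.isColimit _) fun k x => ?_⟩
  · refine ⟨op (op (m + k.unop.unop)), (homOfLE (Nat.le_add_left k.unop.unop m)).op.op, ?_⟩
    exact ext_map_app_eq_zero_of_ext_map_eq_zero hφ hker (pow_add I m k.unop.unop).le hx
  · obtain ⟨n, hn⟩ := exists_ext_map_eq_ext_map_app hφ hker (J := I ^ k.unop.unop) x
    exact ⟨op (op (n + k.unop.unop)), (homOfLE (Nat.le_add_left k.unop.unop n)).op.op,
      hn _ (pow_add I n k.unop.unop).le⟩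

end LocalCohomology

section OddCycle

variable {V : Type*} {G : SimpleGraph V}

lemma cons_isCycle_of_odd {u v : V} (h : G.Adj u v) {p : G.Walk v u} (hp : p.IsPath)
    (hodd : Odd (SimpleGraph.Walk.cons h p).length) : (SimpleGraph.Walk.cons h p).IsCycle := by
  refine (SimpleGraph.Walk.cons_isCycle_iff p h).2 ⟨hp, fun hmem => ?_⟩
  rw [SimpleGraph.Walk.length_cons,
    hp.length_eq_one_of_mem_edges (Sym2.eq_swap (a := u) (b := v) ▸ hmem)] at hodd
  exact absurd hodd (by decide)

lemma exists_isPath_even_add_length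
    (hG : ∀ (u : V) (p : G.Walk u u), p.IsCycle → Even p.length) {u v : V} (p : G.Walk u v) :
    ∃ q : G.Walk u v, q.IsPath ∧ Even (p.length + q.length) := by
  classical
  induction p with
  | nil => exact ⟨.nil, .nil, by simp⟩
  | @cons u w v h p ih =>
    obtain ⟨q, hq, hpq⟩ := ih
    by_cases hu : u ∈ q.support
    · refine ⟨q.dropUntil u hu, hq.dropUntil hu, ?_⟩
      have even_loop : Even ((q.takeUntil u hu).length + 1) := by
        by_contra hodd
        have hodd' := Nat.not_even_iff_odd.1 hodd
        exact hodd (hG u _ (cons_isCycle_of_odd h (hq.takeUntil hu) hodd'))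
      have length_eq := congrArg SimpleGraph.Walk.length (q.take_spec hu)
      rw [SimpleGraph.Walk.length_append] at length_eq
      rw [SimpleGraph.Walk.length_cons]
      grind
    · refine ⟨.cons h q, hq.cons hu, ?_⟩
      simp only [SimpleGraph.Walk.length_cons]
      grind

theorem exists_isCycle_odd_length_of_not_colorable_two (hG : ¬ G.Colorable 2) :
    ∃ (u : V) (p : G.Walk u u), p.IsCycle ∧ Odd p.length := by
  contrapose! hG
  simp only [Nat.not_odd_iff_even] at hG
  refine SimpleGraph.two_colorable_iff_forall_loop_even.2 fun u p => ?_
  obtain ⟨q, hq, hpq⟩ := exists_isPath_even_add_length hG p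
  rwa [SimpleGraph.Walk.length_eq_zero_iff.2 (SimpleGraph.Walk.isPath_iff_nil.1 hq)] at hpq

end OddCycle

section DominatingOddCycles

variable {σ : Type} {Γ : SimpleGraph σ}

lemma isOddCycle_getVert {u : σ} {p : Γ.Walk u u} (hp : p.IsCycle) (hodd : Odd p.length) :
    IsOddCycle Γ p.length fun i => p.getVert i.val := by
  have three_le := hp.three_le_length
  have : NeZero p.length := ⟨by omega⟩
  have : Fact (1 < p.length) := ⟨by omega⟩
  refine ⟨hodd, three_le, fun i j hij => ?_, fun i => ?_⟩
  · have hi := i.val_lt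
    have hj := j.val_lt
    exact ZMod.val_injective _ (hp.getVert_injOn' (Nat.le_sub_one_of_lt hi)
      (Nat.le_sub_one_of_lt hj) hij)
  · have getVert_succ : p.getVert (i + 1).val = p.getVert (i.val + 1) := by
      rw [ZMod.val_add, ZMod.val_one]
      rcases (Nat.succ_le_of_lt i.val_lt).lt_or_eq with hlt | heq
      · rw [Nat.mod_eq_of_lt hlt]
      · rw [← Nat.succ_eq_add_one, heq, Nat.mod_self, p.getVert_zero, p.getVert_length]
    simp only [getVert_succ]
    exact p.adj_getVert_succ i.val_lt

lemma isOddCycle_val {s : Set σ} {m : ℕ} {c : ZMod m → s} (hc : IsOddCycle (Γ.induce s) m c) :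
    IsOddCycle Γ m fun i => (c i : σ) :=
  ⟨hc.1, hc.2.1, Subtype.val_injective.comp hc.2.2.1, hc.2.2.2⟩

lemma colorable_two_induce_compl_closedNbhd
    (hdom : ∀ (m : ℕ) (c : ZMod m → σ), IsOddCycle Γ m c → Dominating Γ (Set.range c)) (v : σ) :
    (Γ.induce (closedNbhd Γ v)ᶜ).Colorable 2 := by
  by_contra hcol
  obtain ⟨u, p, hp, hodd⟩ := exists_isCycle_odd_length_of_not_colorable_two hcol
  have not_mem_range : v ∉ Set.range fun i : ZMod p.length => (p.getVert i.val : σ) := by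
    rintro ⟨i, hi⟩
    exact (p.getVert i.val).2 (Or.inl hi)
  obtain ⟨_, ⟨i, rfl⟩, hadj⟩ :=
    hdom _ _ (isOddCycle_val (isOddCycle_getVert hp hodd)) v not_mem_range
  exact (p.getVert i.val).2 (Or.inr hadj.symm)

variable [Fintype σ] [DecidableEq σ]

lemma exists_isIndep_of_colorable_two {v : σ} (hcol : (Γ.induce (closedNbhd Γ v)ᶜ).Colorable 2) :
    ∃ L : Finset σ, v ∈ L ∧ IsIndep Γ L ∧
      ∀ i ∉ L, ∀ j ∉ L, ¬ Γ.Adj v i → ¬ Γ.Adj v j → ¬ Γ.Adj i j := by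
  classical
  obtain ⟨C⟩ := hcol
  let L : Finset σ := {i | i = v ∨ ∃ hi : i ∈ (closedNbhd Γ v)ᶜ, C ⟨i, hi⟩ = 0}
  have mem_L (i : σ) : i ∈ L ↔ i = v ∨ ∃ hi : i ∈ (closedNbhd Γ v)ᶜ, C ⟨i, hi⟩ = 0 := by
    simp [L]
  have color_ne {i j : σ} (hi : i ∈ (closedNbhd Γ v)ᶜ) (hj : j ∈ (closedNbhd Γ v)ᶜ)
      (hij : Γ.Adj i j) : C ⟨i, hi⟩ ≠ C ⟨j, hj⟩ :=
    C.valid (v := ⟨i, hi⟩) (w := ⟨j, hj⟩) hij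
  have not_adj {i : σ} (hi : i ∈ (closedNbhd Γ v)ᶜ) : ¬ Γ.Adj v i := fun h => hi (Or.inr h)
  refine ⟨L, (mem_L v).2 (Or.inl rfl), fun i hi j hj hij => ?_, fun i hi j hj hvi hvj hij => ?_⟩
  · rcases (mem_L i).1 hi with rfl | ⟨hi', hci⟩ <;> rcases (mem_L j).1 hj with rfl | ⟨hj', hcj⟩
    · exact Γ.irrefl hij
    · exact not_adj hj' hij
    · exact not_adj hi' hij.symm
    · exact color_ne hi' hj' hij (hci.trans hcj.symm)
  · rw [mem_L, not_or, not_exists] at hi hj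
    have hi' : i ∈ (closedNbhd Γ v)ᶜ := fun h => h.elim hi.1 hvi
    have hj' : j ∈ (closedNbhd Γ v)ᶜ := fun h => h.elim hj.1 hvj
    exact color_ne hi' hj' hij ((Fin.eq_one_of_ne_zero _ (hi.2 hi')).trans
      (Fin.eq_one_of_ne_zero _ (hj.2 hj')).symm)

lemma exists_isMaxIndep_superset {F : Finset σ} (hF : IsIndep Γ F) :
    ∃ G, IsMaxIndep Γ G ∧ F ⊆ G := by
  obtain ⟨G, hFG, hG⟩ := (Set.toFinite {G : Finset σ | IsIndep Γ G}).exists_le_maximal hF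
  exact ⟨G, ⟨hG.1, fun H hH hGH => (hG.2 hH hGH).antisymm hGH⟩, hFG⟩

end DominatingOddCycles

section WeightedMatching

open Finset

theorem exists_partial_transversal {ι α : Type*} [Fintype ι] [DecidableEq α] (N : ι → Finset α)
    (d : ℕ) (hN : ∀ s : Finset ι, #s ≤ #(s.biUnion N) + d) :
    ∃ (T : Finset ι) (f : T → α),
      Fintype.card ι ≤ #T + d ∧ Function.Injective f ∧ ∀ i : T, f i ∈ N i := by
  classical
  -- Enlarge every `N i` by the same `d` dummy elements and apply Hall's theorem.
  have hall (s : Finset ι) : #s ≤ #(s.biUnion fun i => (N i).disjSum (univ : Finset (Fin d))) := by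
    rcases s.eq_empty_or_nonempty with rfl | ⟨i₀, hi₀⟩
    · exact Nat.zero_le _
    · have disjSum_subset : (s.biUnion N).disjSum (univ : Finset (Fin d)) ⊆
          s.biUnion fun i => (N i).disjSum univ := by
        rintro (a | x) hx
        · simpa using hx
        · exact mem_biUnion.2 ⟨i₀, hi₀, inr_mem_disjSum.2 (mem_univ x)⟩
      have card_le := card_le_card disjSum_subset
      rw [card_disjSum, card_univ, Fintype.card_fin] at card_le
      exact (hN s).trans card_le
  obtain ⟨f, f_injective, hf⟩ := (all_card_le_biUnion_card_iff_exists_injective _).1 hall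
  let T : Finset ι := {i | (f i).isLeft}
  have isLeft (i : T) : (f i).isLeft := (mem_filter.1 i.2).2
  have card_dummy : #{i | ¬ (f i).isLeft} ≤ d := by
    have card_le := card_le_card_of_injOn (s := {i | ¬ (f i).isLeft})
      (t := (univ : Finset (Fin d)).map .inr) f (fun i hi => ?_) f_injective.injOn
    · rwa [card_map, card_univ, Fintype.card_fin] at card_le
    · obtain ⟨x, hx⟩ := Sum.isRight_iff.1 (Sum.not_isLeft.1 (mem_filter.1 hi).2)
      simp [hx]
  refine ⟨T, fun i : T => (f i).getLeft (isLeft i), ?_, fun i j hij => ?_, fun i => ?_⟩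
  · rw [← card_univ, ← card_filter_add_card_filter_not (fun i => (f i).isLeft)]
    exact Nat.add_le_add_left card_dummy _
  · refine Subtype.ext (f_injective ?_)
    rw [← Sum.inl_getLeft _ (isLeft i), ← Sum.inl_getLeft _ (isLeft j)]
    exact congrArg Sum.inl hij
  · have hfi := hf i
    rwa [← Sum.inl_getLeft _ (isLeft i), inl_mem_disjSum] at hfi

variable {σ : Type*} [Fintype σ] [DecidableEq σ]

lemma card_filter_fst_mem (b : σ → ℕ) (A : Finset σ) :
    #{w : Σ i, Fin (b i) | w.1 ∈ A} = ∑ i ∈ A, b i := by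
  have filter_eq : ({w : Σ i, Fin (b i) | w.1 ∈ A} : Finset _) = A.sigma fun _ => univ := by
    ext w
    simp
  simp [filter_eq]

open Classical in
/-- A `b`-matching between `L` and its complement is encoded as a matching of the blow-up of `Γ` in
which every vertex `i` is replaced by `b i` copies. -/
theorem exists_matching_blowup {Γ : SimpleGraph σ} {b : σ → ℕ} {L : Finset σ} {t : ℕ}
    (hL : ∀ S ⊆ L, t ≤ ∑ i ∈ L \ S, b i + ∑ i with i ∉ L ∧ ∃ l ∈ S, Γ.Adj l i, b i) :
    ∃ (T : Finset {w : Σ i, Fin (b i) // w.1 ∈ L}) (f : T → Σ i, Fin (b i)),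
      t ≤ #T ∧ Function.Injective f ∧ ∀ w, (f w).1 ∉ L ∧ Γ.Adj w.1.1.1 (f w).1 := by
  have card_copies : Fintype.card {w : Σ i, Fin (b i) // w.1 ∈ L} = ∑ i ∈ L, b i := by
    rw [Fintype.card_subtype, card_filter_fst_mem]
  have t_le : t ≤ ∑ i ∈ L, b i := by simpa using hL ∅ (empty_subset L)
  let N (w : {w : Σ i, Fin (b i) // w.1 ∈ L}) : Finset (Σ i, Fin (b i)) :=
    {w' | w'.1 ∉ L ∧ Γ.Adj w.1.1 w'.1}
  have hall (s : Finset {w : Σ i, Fin (b i) // w.1 ∈ L}) :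
      #s ≤ #(s.biUnion N) + (∑ i ∈ L, b i - t) := by
    let S : Finset σ := s.image fun w => w.1.1
    have S_subset : S ⊆ L := image_subset_iff.2 fun w _ => w.2
    have card_s : #s ≤ ∑ i ∈ S, b i := by
      rw [← card_filter_fst_mem, ← card_map (.subtype _)]
      refine card_le_card fun w hw => ?_
      obtain ⟨w, hws, rfl⟩ := mem_map.1 hw
      exact mem_filter.2 ⟨mem_univ _, mem_image_of_mem _ hws⟩
    have card_biUnion : #(s.biUnion N) = ∑ i with i ∉ L ∧ ∃ l ∈ S, Γ.Adj l i, b i := by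
      rw [← card_filter_fst_mem]
      congr 1
      ext w
      simp only [N, S, mem_biUnion, mem_filter, mem_univ, true_and, mem_image]
      grind
    have sum_L := sum_sdiff (f := b) S_subset
    have t_le_S := hL S S_subset
    omega
  obtain ⟨T, f, card_T, f_injective, hf⟩ := exists_partial_transversal N _ hall
  exact ⟨T, f, by omega, f_injective, fun w => (mem_filter.1 (hf w)).2⟩

end WeightedMatching

section EdgeIdealPowers

open Finset

lemma prod_comp_dvd_prod {α β M : Type*} [Fintype α] [Fintype β] [CommMonoid M] (h : β → M)
    {e : α → β} (he : Function.Injective e) : ∏ x, h (e x) ∣ ∏ y, h y := by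
  have prod_map_eq : ∏ y ∈ univ.map ⟨e, he⟩, h y = ∏ x, h (e x) := prod_map _ _ _
  exact prod_map_eq ▸ prod_dvd_prod_of_subset _ _ h (subset_univ _)

variable (k : Type) [Field k] {σ : Type} {Γ : SimpleGraph σ}

lemma prod_X_mul_X_mem_edgeIdeal_pow {τ : Type*} [Fintype τ] {f g : τ → σ}
    (hadj : ∀ x, Γ.Adj (f x) (g x)) :
    ∏ x, (X (f x) * X (g x) : MvPolynomial σ k) ∈ edgeIdeal k Γ ^ Fintype.card τ := by
  rw [← card_univ, ← prod_const]
  exact Ideal.prod_mem_prod fun x _ => Ideal.subset_span ⟨_, _, hadj x, rfl⟩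

variable [Fintype σ]

lemma prod_X_pow_mem_edgeIdeal_pow {b : σ → ℕ} {τ : Type*} [Fintype τ]
    {f g : τ → Σ i, Fin (b i)} (hfg : Function.Injective (Sum.elim f g))
    (hadj : ∀ x, Γ.Adj (f x).1 (g x).1) :
    ∏ i, (X i : MvPolynomial σ k) ^ b i ∈ edgeIdeal k Γ ^ Fintype.card τ := by
  have prod_dvd := prod_comp_dvd_prod (fun w => (X w.1 : MvPolynomial σ k)) hfg
  refine Ideal.mem_of_dvd _ ?_ (prod_X_mul_X_mem_edgeIdeal_pow k hadj)
  calc ∏ x, (X (f x).1 * X (g x).1 : MvPolynomial σ k)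
      = ∏ z : τ ⊕ τ, (X (Sum.elim f g z).1 : MvPolynomial σ k) := by
        simp only [Fintype.prod_sum_type, prod_mul_distrib, Sum.elim_inl, Sum.elim_inr]
    _ ∣ ∏ w : Σ i, Fin (b i), (X w.1 : MvPolynomial σ k) := prod_dvd
    _ = ∏ i, (X i : MvPolynomial σ k) ^ b i := by simp [Fintype.prod_sigma]

variable [DecidableEq σ]

open Classical in
theorem prod_X_pow_mem_edgeIdeal_pow_of_le_sum {b : σ → ℕ} {L : Finset σ} {t : ℕ}
    (hL : ∀ S ⊆ L, t ≤ ∑ i ∈ L \ S, b i + ∑ i with i ∉ L ∧ ∃ l ∈ S, Γ.Adj l i, b i) :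
    ∏ i, (X i : MvPolynomial σ k) ^ b i ∈ edgeIdeal k Γ ^ t := by
  obtain ⟨T, f, t_le, f_injective, hf⟩ := exists_matching_blowup hL
  have elim_injective : Function.Injective (Sum.elim (fun w : T => w.1.1) f) :=
    (Subtype.val_injective.comp Subtype.val_injective).sumElim f_injective fun w w' h =>
      (hf w').1 (h ▸ w.1.2)
  refine Ideal.pow_le_pow_right ?_
    (prod_X_pow_mem_edgeIdeal_pow k elim_injective fun w => (hf w).2)
  rwa [Fintype.card_coe]

end EdgeIdealPowers

section SymbolicPower

open Finset

variable {σ : Type} [Fintype σ] [DecidableEq σ] {Γ : SimpleGraph σ}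

open Classical in
lemma isIndep_union_filter_not_adj {v : σ} {L S : Finset σ} (hL : IsIndep Γ L)
    (hLc : ∀ i ∉ L, ∀ j ∉ L, ¬ Γ.Adj v i → ¬ Γ.Adj v j → ¬ Γ.Adj i j) (hSL : S ⊆ L)
    (hvS : v ∈ S) : IsIndep Γ (S ∪ univ.filter fun i => i ∉ L ∧ ∀ l ∈ S, ¬ Γ.Adj l i) := by
  intro i hi j hj hij
  simp only [mem_union, mem_filter, mem_univ, true_and] at hi hj
  rcases hi with hiS | ⟨hiL, hiS⟩ <;> rcases hj with hjS | ⟨hjL, hjS⟩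
  · exact hL i (hSL hiS) j (hSL hjS) hij
  · exact hjS i hiS hij
  · exact hiS j hjS hij.symm
  · exact hLc i hiL j hjL (hiS v hvS) (hjS v hvS) hij

open Classical in
lemma le_sum_sdiff_add_sum_adj {t : ℕ} {a : σ → ℕ}
    (ha : ∀ F, IsMaxIndep Γ F → t ≤ ∑ i ∈ Fᶜ, a i) {v : σ} {L S : Finset σ} (hL : IsIndep Γ L)
    (hLc : ∀ i ∉ L, ∀ j ∉ L, ¬ Γ.Adj v i → ¬ Γ.Adj v j → ¬ Γ.Adj i j) (hSL : S ⊆ L)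
    (hvS : v ∈ S) :
    t ≤ ∑ i ∈ L \ S, a i + ∑ i with i ∉ L ∧ ∃ l ∈ S, Γ.Adj l i, a i := by
  obtain ⟨F, hF, subset_F⟩ :=
    exists_isMaxIndep_superset (isIndep_union_filter_not_adj hL hLc hSL hvS)
  have compl_subset : Fᶜ ⊆ (L \ S) ∪ ({i | i ∉ L ∧ ∃ l ∈ S, Γ.Adj l i} : Finset σ) := by
    intro i hi
    have hi' := fun h => mem_compl.1 hi (subset_F h)
    simp only [mem_union, mem_sdiff, mem_filter, mem_univ, true_and] at hi' ⊢
    grind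
  calc t ≤ ∑ i ∈ Fᶜ, a i := ha F hF
    _ ≤ ∑ i ∈ (L \ S) ∪ ({i | i ∉ L ∧ ∃ l ∈ S, Γ.Adj l i} : Finset σ), a i :=
        sum_le_sum_of_subset compl_subset
    _ ≤ _ := by
        rw [← sum_union_inter]
        exact Nat.le_add_right _ _

variable (k : Type) [Field k]

theorem X_pow_mul_prod_X_pow_mem_edgeIdeal_pow
    (hdom : ∀ (m : ℕ) (c : ZMod m → σ), IsOddCycle Γ m c → Dominating Γ (Set.range c))
    {t : ℕ} {a : σ → ℕ} (ha : ∀ F, IsMaxIndep Γ F → t ≤ ∑ i ∈ Fᶜ, a i) (v : σ) :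
    (X v : MvPolynomial σ k) ^ t * ∏ i, X i ^ a i ∈ edgeIdeal k Γ ^ t := by
  obtain ⟨L, hvL, hL, hLc⟩ :=
    exists_isIndep_of_colorable_two (colorable_two_induce_compl_closedNbhd hdom v)
  have prod_eq : (X v : MvPolynomial σ k) ^ t * ∏ i, X i ^ a i =
      ∏ i, X i ^ (a i + if i = v then t else 0) := by
    simp only [pow_add, pow_ite, pow_zero, prod_mul_distrib, prod_ite_eq', mem_univ, if_true,
      mul_comm]
  rw [prod_eq]
  refine prod_X_pow_mem_edgeIdeal_pow_of_le_sum k (L := L) fun S hSL => ?_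
  by_cases hvS : v ∈ S
  · refine (le_sum_sdiff_add_sum_adj ha hL hLc hSL hvS).trans (Nat.add_le_add ?_ ?_) <;>
      exact sum_le_sum fun i _ => Nat.le_add_right _ _
  · have single_le := single_le_sum_of_canonicallyOrdered
      (f := fun i => a i + if i = v then t else 0) (mem_sdiff.2 ⟨hvL, hvS⟩)
    simp only [if_true] at single_le
    omega

lemma le_sum_compl_of_mem_PF_pow {F : Finset σ} {t : ℕ} {f : MvPolynomial σ k}
    (hf : f ∈ PF k F ^ t) {a : σ →₀ ℕ} (ha : a ∈ f.support) : t ≤ ∑ i ∈ Fᶜ, a i := by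
  have PF_eq : PF k F = Ideal.span (X '' (Fᶜ : Set σ)) := by
    simp only [PF, Set.image, Set.mem_compl_iff, mem_coe, eq_comm]
  induction t generalizing f a with
  | zero => exact Nat.zero_le _
  | succ t ih =>
    rw [pow_succ] at hf
    induction hf using Submodule.mul_induction_on' generalizing a with
    | mem_mul_mem p hp q hq =>
      obtain ⟨b, hb, c, hc, rfl⟩ := mem_add.1 (support_mul p q ha)
      rw [PF_eq, mem_ideal_span_X_image] at hq
      obtain ⟨i, hi, hci⟩ := hq c hc
      have t_le := ih hp hb
      have c_le := single_le_sum_of_canonicallyOrdered (f := c) (mem_compl.2 hi)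
      simp only [Finsupp.add_apply, sum_add_distrib]
      omega
    | add p _ q _ hp hq => exact (mem_union.1 (support_add ha)).elim hp hq

theorem X_pow_mul_mem_edgeIdeal_pow
    (hdom : ∀ (m : ℕ) (c : ZMod m → σ), IsOddCycle Γ m c → Dominating Γ (Set.range c))
    {t : ℕ} {f : MvPolynomial σ k} (hf : f ∈ symbPow k Γ t) (v : σ) :
    X v ^ t * f ∈ edgeIdeal k Γ ^ t := by
  rw [f.as_sum, mul_sum]
  refine Ideal.sum_mem _ fun a ha => ?_
  rw [monomial_eq, Finsupp.prod_fintype _ _ fun i => pow_zero _, mul_left_comm]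
  refine Ideal.mul_mem_left _ _ (X_pow_mul_prod_X_pow_mem_edgeIdeal_pow k hdom (fun F hF => ?_) v)
  exact le_sum_compl_of_mem_PF_pow k (iInf₂_le (α := Ideal _) F hF hf) ha

theorem exists_maxIdeal_pow_mul_symbPow_le
    (hdom : ∀ (m : ℕ) (c : ZMod m → σ), IsOddCycle Γ m c → Dominating Γ (Set.range c)) (t : ℕ) :
    ∃ N, maxIdeal k σ ^ N * symbPow k Γ t ≤ edgeIdeal k Γ ^ t := by
  have maxIdeal_le : maxIdeal k σ ≤ ((edgeIdeal k Γ ^ t).colon (symbPow k Γ t)).radical := by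
    rw [maxIdeal, Ideal.span_le, Set.range_subset_iff]
    exact fun v => ⟨t, Submodule.mem_colon.2 fun f hf => X_pow_mul_mem_edgeIdeal_pow k hdom hf v⟩
  obtain ⟨N, hN⟩ := Ideal.exists_pow_le_of_le_radical_of_fg maxIdeal_le (IsNoetherian.noetherian _)
  exact ⟨N, Ideal.mul_le.2 fun r hr f hf => Submodule.mem_colon.1 (hN hr) f hf⟩

lemma edgeIdeal_pow_le_symbPow (Γ : SimpleGraph σ) (t : ℕ) :
    edgeIdeal k Γ ^ t ≤ symbPow k Γ t := by
  refine le_iInf₂ fun F hF => Ideal.pow_right_mono (Ideal.span_le.2 ?_) t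
  rintro _ ⟨i, j, hij, rfl⟩
  by_cases hi : i ∈ F
  · exact Ideal.mul_mem_left _ _ (Ideal.subset_span ⟨j, fun hj => hF.1 i hi j hj hij, rfl⟩)
  · exact Ideal.mul_mem_right _ _ (Ideal.subset_span ⟨i, hi, rfl⟩)

end SymbolicPower

section FiniteLength

instance maxIdeal_isMaximal (k : Type) [Field k] (σ : Type) : (maxIdeal k σ).IsMaximal := by
  have maxIdeal_eq : maxIdeal k σ = RingHom.ker (constantCoeff : MvPolynomial σ k →+* k) := by
    ext f
    have mem_iff := mem_pow_idealOfVars_iff' 1 f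
    rw [pow_one] at mem_iff
    exact mem_iff.trans (by simp [constantCoeff_eq, Finsupp.degree_eq_zero_iff])
  rw [maxIdeal_eq]
  exact RingHom.ker_isMaximal_of_surjective _ fun a => ⟨C a, constantCoeff_C σ a⟩

variable {R : Type*} [CommRing R] {I J J' : Ideal R}

lemma isFiniteLength_of_pow_le_annihilator {M : Type*} [AddCommGroup M] [Module R M]
    [IsNoetherianRing R] [I.IsMaximal] [Module.Finite R M] {N : ℕ}
    (hI : I ^ N ≤ Module.annihilator R M) : IsFiniteLength R M := by
  have : Ring.KrullDimLE 0 (R ⧸ I ^ N) := by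
    refine Ideal.krullDimLE_zero_quotient_iff_forall_minimalPrimes_isMaximal.2 fun P hP => ?_
    have P_isPrime : P.IsPrime := hP.1.1
    have I_eq : I = P :=
      Ideal.IsMaximal.eq_of_le ‹I.IsMaximal› P_isPrime.ne_top (P_isPrime.le_of_pow_le hP.1.2)
    exact I_eq ▸ ‹I.IsMaximal›
  have : IsArtinianRing (R ⧸ I ^ N) :=
    isArtinianRing_iff_isNoetherianRing_krullDimLE_zero.2 ⟨inferInstance, this⟩
  have torsion : Module.IsTorsionBySet R M (I ^ N : Ideal R) := fun x r =>
    Module.mem_annihilator.1 (hI r.2) x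
  let _ : Module (R ⧸ I ^ N) M := torsion.module
  have : IsScalarTower R (R ⧸ I ^ N) M := torsion.isScalarTower
  have : Module.Finite (R ⧸ I ^ N) M := .of_restrictScalars_finite R _ _
  exact isFiniteLength_iff_isNoetherian_isArtinian.2 ⟨inferInstance,
    isArtinian_of_surjective_algebraMap (R := R ⧸ I ^ N) Ideal.Quotient.mk_surjective⟩

lemma le_annihilator_quotient_comap_subtype (hI : I * J ≤ J') :
    I ≤ Module.annihilator R (J ⧸ Submodule.comap J.subtype J') := by
  refine fun r hr => Module.mem_annihilator.2 fun x => ?_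
  obtain ⟨y, rfl⟩ := Submodule.Quotient.mk_surjective _ x
  exact (Submodule.Quotient.mk_eq_zero _).2 (hI (Ideal.mul_mem_mul hr y.2))

lemma le_annihilator_ker_mapQ_id (h : J' ≤ J) (hI : I * J ≤ J') :
    I ≤ (LinearMap.ker (Submodule.mapQ J' J LinearMap.id h)).annihilator := by
  refine fun r hr => Submodule.mem_annihilator.2 fun x hx => ?_
  obtain ⟨y, rfl⟩ := Submodule.Quotient.mk_surjective _ x
  have hy : y ∈ J := (Submodule.Quotient.mk_eq_zero J).1 hx
  exact (Submodule.Quotient.mk_eq_zero J').2 (hI (Ideal.mul_mem_mul hr hy))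

end FiniteLength

theorem stmt9_general (k : Type) [Field k] {σ : Type} [Fintype σ] [DecidableEq σ]
    (Γ : SimpleGraph σ)
    (hdom : ∀ (m : ℕ) (c : ZMod m → σ), IsOddCycle Γ m c → Dominating Γ (Set.range c)) (t : ℕ) :
    IsFiniteLength (MvPolynomial σ k)
      (symbPow k Γ t ⧸ Submodule.comap (symbPow k Γ t).subtype (edgeIdeal k Γ ^ t)) ∧
    Nonempty (locCoh k (edgeIdeal k Γ ^ t) 1 ≅ locCoh k (symbPow k Γ t) 1) := by
  obtain ⟨N, hN⟩ := exists_maxIdeal_pow_mul_symbPow_le k hdom t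
  have pow_le_symbPow := edgeIdeal_pow_le_symbPow k Γ t
  refine ⟨isFiniteLength_of_pow_le_annihilator (le_annihilator_quotient_comap_subtype hN), ?_⟩
  have mapQ_surjective : Function.Surjective (quotientMapOfLE pow_le_symbPow).hom :=
    .of_comp (g := Submodule.mkQ _) (Submodule.mkQ_surjective _)
  have map_isIso : CategoryTheory.IsIso
      ((localCohomology (maxIdeal k σ) 1).map (quotientMapOfLE pow_le_symbPow)) :=
    isIso_localCohomology_one_map mapQ_surjective (le_annihilator_ker_mapQ_id pow_le_symbPow hN)
  let mapIso := CategoryTheory.asIso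
    ((localCohomology (maxIdeal k σ) 1).map (quotientMapOfLE pow_le_symbPow))
  exact ⟨mapIso⟩

/-- Let `Γ` be a connected non-bipartite graph in which the vertex set
of every odd cycle is dominating. Then for every `t ≥ 1` the module `I^{(t)}/I^t` has
finite length and `H^1_m(R/I^t) ≅ H^1_m(R/I^{(t)})`. -/
theorem stmt9 (k : Type) [Field k] (n : ℕ) (Γ : SimpleGraph (Fin n))
    (hiso : NoIsolated Γ) (hconn : Γ.Connected) (hnb : ¬ Γ.Colorable 2)
    (hdom : ∀ (m : ℕ) (c : ZMod m → Fin n), IsOddCycle Γ m c →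
      Dominating Γ (Set.range c))
    (t : ℕ) (ht : 1 ≤ t) :
    IsFiniteLength (MvPolynomial (Fin n) k)
      ((symbPow k Γ t : Submodule (MvPolynomial (Fin n) k) (MvPolynomial (Fin n) k)) ⧸
        (Submodule.comap (symbPow k Γ t : Submodule (MvPolynomial (Fin n) k)
            (MvPolynomial (Fin n) k)).subtype
          ((edgeIdeal k Γ) ^ t : Submodule (MvPolynomial (Fin n) k)
            (MvPolynomial (Fin n) k)))) ∧
    Nonempty (locCoh k ((edgeIdeal k Γ) ^ t) 1 ≅ locCoh k (symbPow k Γ t) 1) := by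
  exact stmt9_general k Γ hdom t

end
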